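/- Let d > 2 and let C be a positive semidefinite matrix on ℂ²⊗ℂ^d with eigenvalues λ1 ≥ … ≥ λ_{2d} satisfying λ3 = λ4 = … = λ_{2d−1} and λ2 ≥ 2(d−2)λ3 + λ_{2d}. Then at least one of the following majorizations holds: λ(tr_1[C]) ⊕ λ(tr_2[C]) ≺ λ(tr_1[Λ]) ⊕ λ(tr_2[Λ]), or λ(tr_1[C]) ⊕ λ(tr_2[C]) ≺ λ(tr_1[Λ']) ⊕ λ(tr_2[Λ']), where Λ is the diagonal matrix with diagonal (λ1, …, λ_{2d}) (decreasing order with respect to the lexicographic index ordering) and Λ' is obtained from Λ by swapping the diagonal entries at positions 2 and d+1. -/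

import Mathlib

open Matrix Finset Kronecker
open scoped ComplexOrder

/-- The first partial trace of a matrix on `ℂ^{d1} ⊗ ℂ^{d2}` (index pairs `(i,s)` ordered
lexicographically): `(tr_1 C)_{s,t} = ∑_i C_{(i,s),(i,t)}`. -/
noncomputable def ptrace1 {d1 d2 : ℕ} (C : Matrix (Fin d1 × Fin d2) (Fin d1 × Fin d2) ℂ) :
    Matrix (Fin d2) (Fin d2) ℂ :=
  Matrix.of fun s t => ∑ i : Fin d1, C (i, s) (i, t)

/-- The second partial trace: `(tr_2 C)_{i,j} = ∑_s C_{(i,s),(j,s)}`. -/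
noncomputable def ptrace2 {d1 d2 : ℕ} (C : Matrix (Fin d1 × Fin d2) (Fin d1 × Fin d2) ℂ) :
    Matrix (Fin d1) (Fin d1) ℂ :=
  Matrix.of fun i j => ∑ s : Fin d2, C (i, s) (j, s)

/-- The sum of the `k` largest entries of the vector `x` (the largest value of a sum of `k`
entries of `x`), i.e. `∑_{i=1}^k x_i^↓`. -/
noncomputable def maxSum {ι : Type*} [Fintype ι] (x : ι → ℝ) (k : ℕ) : ℝ :=
  sSup {s : ℝ | ∃ A : Finset ι, A.card = k ∧ s = ∑ i ∈ A, x i}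

/-- `x ≺ y` (majorization): for every `k`, the sum of the `k` largest entries of `x` is at
most the sum of the `k` largest entries of `y`, and the total sums are equal. -/
def Majorizes {ι κ : Type*} [Fintype ι] [Fintype κ] (x : ι → ℝ) (y : κ → ℝ) : Prop :=
  (∀ k : ℕ, maxSum x k ≤ maxSum y k) ∧ ∑ i, x i = ∑ j, y j

/-- `x ≺_w y` (weak majorization). -/
def WeakMajorizes {ι κ : Type*} [Fintype ι] [Fintype κ] (x : ι → ℝ) (y : κ → ℝ) : Prop :=
  ∀ k : ℕ, maxSum x k ≤ maxSum y k

lemma le_maxSum {ι : Type*} [Fintype ι] (x : ι → ℝ) (k : ℕ) (A : Finset ι) (hA : A.card = k) :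
    ∑ i ∈ A, x i ≤ maxSum x k := by
  refine le_csSup ?_ ⟨A, hA, rfl⟩
  have hfin : (Set.range fun A : Finset ι => ∑ i ∈ A, x i).Finite := Set.finite_range _
  refine hfin.bddAbove.mono ?_
  rintro s ⟨A, -, rfl⟩
  exact ⟨A, rfl⟩

lemma maxSum_le_maxSum {ι : Type*} [Fintype ι] (x y : ι → ℝ)
    (h : ∀ A : Finset ι, ∑ i ∈ A, x i ≤ maxSum y A.card) (k : ℕ) :
    maxSum x k ≤ maxSum y k := by
  by_cases hk : ∃ A : Finset ι, A.card = k
  · obtain ⟨A, hA⟩ := hk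
    refine csSup_le ⟨_, A, hA, rfl⟩ ?_
    rintro s ⟨B, hB, rfl⟩
    rw [← hB]
    exact h B
  · have e1 : ∀ z : ι → ℝ, {s : ℝ | ∃ A : Finset ι, A.card = k ∧ s = ∑ i ∈ A, z i} = ∅ := by
      intro z
      ext s
      simp only [Set.mem_ofPred_eq, Set.mem_empty_iff_false, iff_false]
      rintro ⟨A, hA, -⟩
      exact hk ⟨A, hA⟩
    unfold maxSum
    rw [e1, e1]

lemma maj_of (d : ℕ) (hd : 2 < d) (c : Fin 2 × Fin d → ℝ) (a b m e : ℝ)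
    (hab : b ≤ a) (hbm : m ≤ b) (hem : e ≤ m) (he : 0 ≤ e)
    (hgap : 2 * ((d : ℝ) - 2) * m + e ≤ b)
    (h1 : ∀ x, c x ≤ a)
    (h2 : ∀ S : Finset (Fin 2 × Fin d), 2 ≤ S.card →
      ∑ x ∈ S, c x ≤ a + b + ((S.card : ℝ) - 2) * m)
    (hT : ∑ x, c x = a + b + (2 * (d : ℝ) - 3) * m + e)
    (α : Fin d → ℝ) (β : Fin 2 → ℝ) (hα : ∀ s, α s = ∑ i, c (i, s)) (hβ : ∀ i, β i = ∑ s, c (i, s))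
    (y : Fin d ⊕ Fin 2 → ℝ)
    (hy1 : ∀ i, β i ≤ maxSum y 1) (hy1' : a + b ≤ maxSum y 1)
    (hy2 : 2 * a + b + ((d : ℝ) - 1) * m ≤ maxSum y 2)
    (hy3 : 2 * a + 2 * b + d * m ≤ maxSum y 3)
    (hy3' : ∀ s, a + b + (2 * (d : ℝ) - 3) * m + e + α s ≤ maxSum y 3)
    (hyk : ∀ p, 2 ≤ p → p < d →
      a + b + (2 * (d : ℝ) - 3) * m + e + (a + b + (2 * (p : ℝ) - 2) * m) ≤ maxSum y (p + 2))
    (hlast : ∑ i, y i = 2 * (a + b + (2 * (d : ℝ) - 3) * m + e)) :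
    Majorizes (Sum.elim α β) y := by
  have hd' : (3 : ℝ) ≤ d := by exact_mod_cast hd
  have hm : 0 ≤ m := he.trans hem
  have hdm : 3 * m ≤ d * m := mul_le_mul_of_nonneg_right hd' hm
  have hβT : ∑ i, β i = a + b + (2 * (d : ℝ) - 3) * m + e := by
    rw [← hT, Fintype.sum_prod_type]
    exact Finset.sum_congr rfl fun i _ => hβ i
  have hαT : ∑ i, α i = a + b + (2 * (d : ℝ) - 3) * m + e := by
    rw [← hT, Fintype.sum_prod_type_right]
    exact Finset.sum_congr rfl fun i _ => hα i
  have E1 : ∀ L : Finset (Fin d), 1 ≤ L.card →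
      ∑ s ∈ L, α s ≤ a + b + (2 * (L.card : ℝ) - 2) * m := by
    intro L hL
    have hc : ((Finset.univ : Finset (Fin 2)) ×ˢ L).card = 2 * L.card := by
      simp [Finset.card_product]
    have := h2 (Finset.univ ×ˢ L) (by omega)
    rw [hc, Finset.sum_product_right] at this
    push_cast at this
    simpa [hα] using this
  have E2 : ∀ i, β i ≤ a + b + ((d : ℝ) - 2) * m := by
    intro i
    have hc : (({i} : Finset (Fin 2)) ×ˢ (Finset.univ : Finset (Fin d))).card = d := by
      simp [Finset.card_product]
    have := h2 ({i} ×ˢ Finset.univ) (by omega)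
    rw [hc, Finset.sum_product] at this
    simpa [hβ] using this
  have E4 : ∀ i s, α s + β i ≤ 2 * a + b + ((d : ℝ) - 1) * m := by
    intro i s
    have key : ∀ j : Fin 2, j ≠ i → α s = c (i, s) + c (j, s) := by
      intro j hj
      rw [hα, Fin.sum_univ_two]
      fin_cases i <;> fin_cases j <;> simp_all [add_comm]
    obtain ⟨j, hj⟩ : ∃ j : Fin 2, j ≠ i := exists_ne i
    have hni : (j, s) ∉ ({i} : Finset (Fin 2)) ×ˢ (Finset.univ : Finset (Fin d)) := by
      simp [hj.symm, hj]
    have hc : (insert (j, s) (({i} : Finset (Fin 2)) ×ˢ (Finset.univ : Finset (Fin d)))).card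
        = d + 1 := by
      rw [Finset.card_insert_of_notMem hni]
      simp [Finset.card_product]
    have := h2 (insert (j, s) ({i} ×ˢ Finset.univ)) (by omega)
    rw [hc, Finset.sum_insert hni, Finset.sum_product] at this
    push_cast at this
    simp only [Finset.sum_singleton] at this
    rw [key j hj, hβ]
    have := h1 (i, s)
    linarith
  constructor
  · apply maxSum_le_maxSum
    intro A
    have hsum : ∑ i ∈ A, Sum.elim α β i = ∑ s ∈ A.toLeft, α s + ∑ i ∈ A.toRight, β i := by
      rw [← Finset.toLeft_disjSum_toRight (u := A), Finset.sum_disjSum]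
      simp
    have hcard : A.card = A.toLeft.card + A.toRight.card := by
      rw [Finset.card_toLeft_add_card_toRight]
    rw [hsum, hcard]
    generalize A.toLeft = L
    generalize A.toRight = R
    have hL : L.card ≤ d := by simpa using Finset.card_le_univ L
    have hR : R.card ≤ 2 := by simpa using Finset.card_le_univ R
    obtain hR0 | hR1 | hR2 : R.card = 0 ∨ R.card = 1 ∨ R.card = 2 := by omega
    · rw [Finset.card_eq_zero] at hR0
      subst hR0
      simp only [Finset.sum_empty, add_zero, Finset.card_empty]
      obtain h | h | h | h | h : L.card = 0 ∨ L.card = 1 ∨ L.card = 2 ∨ L.card = 3 ∨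
        4 ≤ L.card := by omega
      · rw [Finset.card_eq_zero] at h
        subst h
        exact le_maxSum y _ ∅ rfl
      all_goals have hE := E1 L (by omega)
      · rw [h] at hE ⊢
        push_cast at hE
        linarith
      · rw [h] at hE ⊢
        push_cast at hE
        linarith
      · rw [h] at hE ⊢
        push_cast at hE
        linarith
      · obtain ⟨p, hp⟩ : ∃ p, L.card = p + 2 := ⟨L.card - 2, by omega⟩
        have := hyk p (by omega) (by omega)
        rw [hp] at hE ⊢
        push_cast at hE
        linarith
    · obtain ⟨i, rfl⟩ := Finset.card_eq_one.1 hR1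
      simp only [Finset.sum_singleton, Finset.card_singleton]
      obtain h | h | h | h : L.card = 0 ∨ L.card = 1 ∨ L.card = 2 ∨ 3 ≤ L.card := by omega
      · rw [Finset.card_eq_zero] at h
        subst h
        simpa using hy1 i
      · obtain ⟨s, rfl⟩ := Finset.card_eq_one.1 h
        simpa using (E4 i s).trans hy2
      · have hE := E1 L (by omega)
        rw [h] at hE ⊢
        push_cast at hE
        have := E2 i
        linarith
      · have hE := E1 L (by omega)
        obtain ⟨p, hp⟩ : ∃ p, L.card = p + 1 := ⟨L.card - 1, by omega⟩
        have := hyk p (by omega) (by omega)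
        have := E2 i
        rw [hp] at hE ⊢
        push_cast at hE
        rw [show p + 1 + 1 = p + 2 from rfl]
        linarith
    · have hRu : R = Finset.univ := by
        rw [← Finset.card_eq_iff_eq_univ]
        simpa using hR2
      subst hRu
      rw [hβT, hR2]
      obtain h | h | h | h : L.card = 0 ∨ L.card = 1 ∨ (2 ≤ L.card ∧ L.card < d) ∨
        L.card = d := by omega
      · rw [Finset.card_eq_zero] at h
        subst h
        simp only [Finset.sum_empty, zero_add, Finset.card_empty]
        linarith
      · obtain ⟨s, rfl⟩ := Finset.card_eq_one.1 h
        have := hy3' s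
        simp only [Finset.sum_singleton, Finset.card_singleton]
        norm_num
        linarith
      · have hE := E1 L (by omega)
        have := hyk L.card h.1 h.2
        linarith
      · have hLu : L = Finset.univ := by
          rw [← Finset.card_eq_iff_eq_univ]
          simpa using h
        subst hLu
        rw [hαT]
        have := le_maxSum y (d + 2) Finset.univ (by simp)
        rw [h]
        linarith
  · rw [Fintype.sum_sum_type, hlast]
    simp only [Sum.elim_inl, Sum.elim_inr]
    rw [hαT, hβT]
    ring

lemma hyk_of (d : ℕ) (hd : 2 < d) (y : Fin d ⊕ Fin 2 → ℝ) (u T m : ℝ)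
    (h01 : y (Sum.inl ⟨0, by omega⟩) + y (Sum.inl ⟨1, by omega⟩) = u + 2 * m)
    (hm : ∀ s : Fin d, 2 ≤ (s : ℕ) → (s : ℕ) + 1 < d → y (Sum.inl s) = 2 * m)
    (hr : y (Sum.inr 0) + y (Sum.inr 1) = T) (p : ℕ) (hp : 2 ≤ p) (hpd : p < d) :
    T + (u + (2 * (p : ℝ) - 2) * m) ≤ maxSum y (p + 2) := by
  have key : ∃ S : Finset (Fin d), (∀ s ∈ S, (s : ℕ) < p) ∧ S.card = p ∧
      ∑ s ∈ S, y (Sum.inl s) = u + (2 * (p : ℝ) - 2) * m := by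
    induction p, hp using Nat.le_induction with
    | base =>
      have hne : (⟨0, by omega⟩ : Fin d) ≠ ⟨1, by omega⟩ := by simp
      refine ⟨{⟨0, by omega⟩, ⟨1, by omega⟩}, ?_, Finset.card_pair hne, ?_⟩
      · intro s hs
        simp only [Finset.mem_insert, Finset.mem_singleton] at hs
        rcases hs with rfl | rfl <;> simp
      · rw [Finset.sum_pair hne, h01]
        push_cast
        ring
    | succ p hp ih =>
      obtain ⟨S, h1, h2, h3⟩ := ih (by omega)
      have hn : (⟨p, by omega⟩ : Fin d) ∉ S := fun h => by simpa using h1 _ h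
      refine ⟨insert ⟨p, by omega⟩ S, ?_, ?_, ?_⟩
      · intro s hs
        rcases Finset.mem_insert.1 hs with rfl | hs
        · simp
        · have := h1 s hs
          omega
      · rw [Finset.card_insert_of_notMem hn, h2]
      · rw [Finset.sum_insert hn, h3, hm _ hp (by simpa using hpd)]
        push_cast
        ring
  obtain ⟨S, -, h2, h3⟩ := key
  have := le_maxSum y (p + 2) (S.disjSum Finset.univ) (by simp [Finset.card_disjSum, h2])
  rw [Finset.sum_disjSum, h3, Fin.sum_univ_two, hr] at this
  linarith

lemma maj_or (d : ℕ) (hd : 2 < d) (c : Fin 2 × Fin d → ℝ) (a b m e : ℝ)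
    (hab : b ≤ a) (hbm : m ≤ b) (hem : e ≤ m) (he : 0 ≤ e)
    (hgap : 2 * ((d : ℝ) - 2) * m + e ≤ b)
    (h1 : ∀ x, c x ≤ a)
    (h2 : ∀ S : Finset (Fin 2 × Fin d), 2 ≤ S.card →
      ∑ x ∈ S, c x ≤ a + b + ((S.card : ℝ) - 2) * m)
    (hT : ∑ x, c x = a + b + (2 * (d : ℝ) - 3) * m + e)
    (α : Fin d → ℝ) (β : Fin 2 → ℝ) (hα : ∀ s, α s = ∑ i, c (i, s)) (hβ : ∀ i, β i = ∑ s, c (i, s))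
    (y y' : Fin d ⊕ Fin 2 → ℝ)
    (hy0 : y (Sum.inl ⟨0, by omega⟩) = a + m) (hy1 : y (Sum.inl ⟨1, by omega⟩) = b + m)
    (hym : ∀ s : Fin d, 2 ≤ (s : ℕ) → (s : ℕ) + 1 < d → y (Sum.inl s) = 2 * m)
    (hyr0 : y (Sum.inr 0) = a + b + ((d : ℝ) - 2) * m)
    (hyr1 : y (Sum.inr 1) = ((d : ℝ) - 1) * m + e)
    (hy0' : y' (Sum.inl ⟨0, by omega⟩) = a + b) (hy1' : y' (Sum.inl ⟨1, by omega⟩) = 2 * m)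
    (hym' : ∀ s : Fin d, 2 ≤ (s : ℕ) → (s : ℕ) + 1 < d → y' (Sum.inl s) = 2 * m)
    (hyr0' : y' (Sum.inr 0) = a + ((d : ℝ) - 1) * m)
    (hyr1' : y' (Sum.inr 1) = b + ((d : ℝ) - 2) * m + e)
    (hs : ∑ i, y (Sum.inl i) = ∑ i, y (Sum.inr i))
    (hs' : ∑ i, y' (Sum.inl i) = ∑ i, y' (Sum.inr i)) :
    Majorizes (Sum.elim α β) y ∨ Majorizes (Sum.elim α β) y' := by
  have hd' : (3 : ℝ) ≤ d := by exact_mod_cast hd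
  have hm : 0 ≤ m := he.trans hem
  have hdm : 3 * m ≤ d * m := mul_le_mul_of_nonneg_right hd' hm
  have hne : (Sum.inl ⟨0, by omega⟩ : Fin d ⊕ Fin 2) ≠ Sum.inl ⟨1, by omega⟩ := by simp
  have hsum : ∑ i, y i = 2 * (a + b + (2 * (d : ℝ) - 3) * m + e) := by
    rw [Fintype.sum_sum_type, hs, Fin.sum_univ_two, hyr0, hyr1]
    ring
  have hsum' : ∑ i, y' i = 2 * (a + b + (2 * (d : ℝ) - 3) * m + e) := by
    rw [Fintype.sum_sum_type, hs', Fin.sum_univ_two, hyr0', hyr1']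
    ring
  have hk := hyk_of d hd y (a + b) (a + b + (2 * (d : ℝ) - 3) * m + e) m
    (by rw [hy0, hy1]; ring) hym (by rw [hyr0, hyr1]; ring)
  have hk' := hyk_of d hd y' (a + b) (a + b + (2 * (d : ℝ) - 3) * m + e) m
    (by rw [hy0', hy1']) hym' (by rw [hyr0', hyr1']; ring)
  have g1 := le_maxSum y 1 {Sum.inr 0} (by simp)
  have g2 := le_maxSum y 2 {Sum.inr 0, Sum.inl ⟨0, by omega⟩} (Finset.card_pair (by simp))
  have g3 := le_maxSum y 3 {Sum.inr 0, Sum.inl ⟨0, by omega⟩, Sum.inl ⟨1, by omega⟩}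
    (Finset.card_eq_three.2 ⟨_, _, _, by simp, by simp, hne, rfl⟩)
  rw [Finset.sum_singleton] at g1
  rw [Finset.sum_pair (by simp)] at g2
  rw [Finset.sum_insert (by simp), Finset.sum_pair hne] at g3
  have g1' := le_maxSum y' 1 {Sum.inl ⟨0, by omega⟩} (by simp)
  have g2' := le_maxSum y' 2 {Sum.inr 0, Sum.inl ⟨0, by omega⟩} (Finset.card_pair (by simp))
  have g3' := le_maxSum y' 3 {Sum.inr 0, Sum.inr 1, Sum.inl ⟨0, by omega⟩}
    (Finset.card_eq_three.2 ⟨_, _, _, by simp, by simp, by simp, rfl⟩)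
  rw [Finset.sum_singleton] at g1'
  rw [Finset.sum_pair (by simp)] at g2'
  rw [Finset.sum_insert (by simp), Finset.sum_pair (by simp)] at g3'
  rw [hyr0] at g1
  rw [hyr0, hy0] at g2
  rw [hyr0, hy0, hy1] at g3
  rw [hy0'] at g1'
  rw [hyr0', hy0'] at g2'
  rw [hyr0', hyr1', hy0'] at g3'
  have E1 : ∀ s, α s ≤ a + b := by
    intro s
    have hc : ((Finset.univ : Finset (Fin 2)) ×ˢ {s}).card = 2 := by
      simp [Finset.card_product]
    have := h2 (Finset.univ ×ˢ {s}) (by omega)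
    rw [hc, Finset.sum_product_right] at this
    push_cast at this
    simpa [hα] using this
  have E2 : ∀ i, β i ≤ a + b + ((d : ℝ) - 2) * m := by
    intro i
    have hc : (({i} : Finset (Fin 2)) ×ˢ (Finset.univ : Finset (Fin d))).card = d := by
      simp [Finset.card_product]
    have := h2 ({i} ×ˢ Finset.univ) (by omega)
    rw [hc, Finset.sum_product] at this
    simpa [hβ] using this
  have E4 : ∀ i s, α s + β i ≤ 2 * a + b + ((d : ℝ) - 1) * m := by
    intro i s
    have key : ∀ j : Fin 2, j ≠ i → α s = c (i, s) + c (j, s) := by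
      intro j hj
      rw [hα, Fin.sum_univ_two]
      fin_cases i <;> fin_cases j <;> simp_all [add_comm]
    obtain ⟨j, hj⟩ : ∃ j : Fin 2, j ≠ i := exists_ne i
    have hni : (j, s) ∉ ({i} : Finset (Fin 2)) ×ˢ (Finset.univ : Finset (Fin d)) := by
      simp [hj.symm, hj]
    have hc : (insert (j, s) (({i} : Finset (Fin 2)) ×ˢ (Finset.univ : Finset (Fin d)))).card
        = d + 1 := by
      rw [Finset.card_insert_of_notMem hni]
      simp [Finset.card_product]
    have := h2 (insert (j, s) ({i} ×ˢ Finset.univ)) (by omega)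
    rw [hc, Finset.sum_insert hni, Finset.sum_product] at this
    push_cast at this
    simp only [Finset.sum_singleton] at this
    rw [key j hj, hβ]
    have := h1 (i, s)
    linarith
  by_cases hcase : ∀ s, α s ≤ a + b - ((d : ℝ) - 3) * m - e
  · left
    refine maj_of d hd c a b m e hab hbm hem he hgap h1 h2 hT α β hα hβ y ?_ ?_ ?_ ?_ ?_ hk hsum
    · intro i
      exact (E2 i).trans g1
    · linarith
    · linarith
    · linarith
    · intro s
      have := hcase s
      linarith
  · right
    push Not at hcase
    obtain ⟨s, hs⟩ := hcase
    refine maj_of d hd c a b m e hab hbm hem he hgap h1 h2 hT α β hα hβ y' ?_ g1' ?_ ?_ ?_ hk'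
      hsum'
    · intro i
      have := E4 i s
      linarith
    · linarith
    · linarith
    · intro s
      have := E1 s
      linarith

lemma schur_diag {n : Type*} [Fintype n] [DecidableEq n] (C : Matrix n n ℂ) (hC : C.IsHermitian)
    (W : Matrix n n ℂ) (hW : W * Wᴴ = 1) (hW' : Wᴴ * W = 1) :
    ∃ D : n → n → ℝ, (∀ x k, 0 ≤ D x k) ∧ (∀ x, ∑ k, D x k = 1) ∧ (∀ k, ∑ x, D x k = 1) ∧
      ∀ x, (Wᴴ * C * W) x x = ((∑ k, D x k * hC.eigenvalues k : ℝ) : ℂ) := by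
  set E : Matrix n n ℂ := hC.eigenvectorUnitary.1 with hE
  have hE1 : E * Eᴴ = 1 := by
    have := (Matrix.mem_unitaryGroup_iff (A := E)).1 hC.eigenvectorUnitary.2
    simpa [star_eq_conjTranspose] using this
  have hE2 : Eᴴ * E = 1 := by
    have := (Matrix.mem_unitaryGroup_iff' (A := E)).1 hC.eigenvectorUnitary.2
    simpa [star_eq_conjTranspose] using this
  have hspec : C = E * Matrix.diagonal (fun k => (hC.eigenvalues k : ℂ)) * Eᴴ := by
    have := hC.spectral_theorem
    rw [Unitary.conjStarAlgAut_apply] at this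
    simpa [star_eq_conjTranspose, Function.comp_def, hE] using this
  set F := Wᴴ * E with hF
  have hF1 : F * Fᴴ = 1 := by
    rw [hF, Matrix.conjTranspose_mul, Matrix.conjTranspose_conjTranspose, Matrix.mul_assoc,
      ← Matrix.mul_assoc E, hE1, Matrix.one_mul, hW']
  have hF2 : Fᴴ * F = 1 := by
    rw [hF, Matrix.conjTranspose_mul, Matrix.conjTranspose_conjTranspose, Matrix.mul_assoc,
      ← Matrix.mul_assoc W, hW, Matrix.one_mul, hE2]
  have hns : ∀ z : ℂ, z * star z = ((Complex.normSq z : ℝ) : ℂ) := fun z => by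
    simpa using Complex.mul_conj z
  refine ⟨fun x k => Complex.normSq (F x k), fun x k => Complex.normSq_nonneg _, ?_, ?_, ?_⟩
  · intro x
    have := congrFun (congrFun hF1 x) x
    simp only [Matrix.mul_apply, Matrix.conjTranspose_apply, Matrix.one_apply_eq, hns] at this
    exact_mod_cast this
  · intro k
    have := congrFun (congrFun hF2 k) k
    simp only [Matrix.mul_apply, Matrix.conjTranspose_apply, Matrix.one_apply_eq] at this
    simp only [mul_comm (star _), hns] at this
    exact_mod_cast this
  · intro x
    have : Wᴴ * C * W = F * Matrix.diagonal (fun k => (hC.eigenvalues k : ℂ)) * Fᴴ := by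
      conv_lhs => rw [hspec]
      rw [hF, Matrix.conjTranspose_mul, Matrix.conjTranspose_conjTranspose]
      simp only [Matrix.mul_assoc]
    rw [this, Matrix.mul_apply]
    simp only [Matrix.mul_diagonal, Matrix.conjTranspose_apply]
    push_cast
    refine Finset.sum_congr rfl fun k _ => ?_
    rw [← hns]
    ring

lemma ptrace1_conj {d1 d2 : ℕ} (C : Matrix (Fin d1 × Fin d2) (Fin d1 × Fin d2) ℂ)
    (V : Matrix (Fin d1) (Fin d1) ℂ) (hV : V * Vᴴ = 1) (U : Matrix (Fin d2) (Fin d2) ℂ)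
    (s t : Fin d2) :
    ∑ i, ((V ⊗ₖ U)ᴴ * C * (V ⊗ₖ U)) (i, s) (i, t) = (Uᴴ * ptrace1 C * U) s t := by
  have hV' : ∀ j j', ∑ i, V j i * star (V j' i) = if j = j' then 1 else 0 := by
    intro j j'
    have := congrFun (congrFun hV j) j'
    simpa [Matrix.mul_apply, Matrix.one_apply] using this
  simp only [Matrix.mul_apply, Matrix.conjTranspose_apply, Matrix.kroneckerMap_apply, ptrace1,
    Matrix.of_apply, Fintype.sum_prod_type, Finset.sum_mul, Finset.mul_sum, star_mul']
  calc _ = ∑ j', ∑ t', ∑ j, ∑ s', (∑ i, V j' i * star (V j i)) *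
          (star (U s' s) * C (j, s') (j', t') * U t' t) := by
        rw [Finset.sum_comm]
        refine Finset.sum_congr rfl fun j' _ => ?_
        rw [Finset.sum_comm]
        refine Finset.sum_congr rfl fun t' _ => ?_
        rw [Finset.sum_comm]
        refine Finset.sum_congr rfl fun j _ => ?_
        rw [Finset.sum_comm]
        refine Finset.sum_congr rfl fun s' _ => ?_
        rw [Finset.sum_mul]
        refine Finset.sum_congr rfl fun i _ => ?_
        ring
    _ = ∑ j', ∑ t', ∑ s', star (U s' s) * C (j', s') (j', t') * U t' t := by
        refine Finset.sum_congr rfl fun j' _ => ?_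
        refine Finset.sum_congr rfl fun t' _ => ?_
        rw [Finset.sum_comm]
        refine Finset.sum_congr rfl fun s' _ => ?_
        simp only [hV', ite_mul, one_mul, zero_mul, Finset.sum_ite_eq, Finset.mem_univ, if_true]
    _ = _ := by
        rw [Finset.sum_comm]
        refine Finset.sum_congr rfl fun t' _ => ?_
        rw [Finset.sum_comm]

lemma ptrace2_conj {d1 d2 : ℕ} (C : Matrix (Fin d1 × Fin d2) (Fin d1 × Fin d2) ℂ)
    (V : Matrix (Fin d1) (Fin d1) ℂ) (U : Matrix (Fin d2) (Fin d2) ℂ) (hU : U * Uᴴ = 1)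
    (i j : Fin d1) :
    ∑ s, ((V ⊗ₖ U)ᴴ * C * (V ⊗ₖ U)) (i, s) (j, s) = (Vᴴ * ptrace2 C * V) i j := by
  have hU' : ∀ j j', ∑ i, U j i * star (U j' i) = if j = j' then 1 else 0 := by
    intro j j'
    have := congrFun (congrFun hU j) j'
    simpa [Matrix.mul_apply, Matrix.one_apply] using this
  simp only [Matrix.mul_apply, Matrix.conjTranspose_apply, Matrix.kroneckerMap_apply, ptrace2,
    Matrix.of_apply, Fintype.sum_prod_type, Finset.sum_mul, Finset.mul_sum, star_mul']
  calc _ = ∑ j', ∑ t', ∑ i', ∑ s', (∑ s, U t' s * star (U s' s)) *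
          (star (V i' i) * C (i', s') (j', t') * V j' j) := by
        rw [Finset.sum_comm]
        refine Finset.sum_congr rfl fun j' _ => ?_
        rw [Finset.sum_comm]
        refine Finset.sum_congr rfl fun t' _ => ?_
        rw [Finset.sum_comm]
        refine Finset.sum_congr rfl fun i' _ => ?_
        rw [Finset.sum_comm]
        refine Finset.sum_congr rfl fun s' _ => ?_
        rw [Finset.sum_mul]
        refine Finset.sum_congr rfl fun i _ => ?_
        ring
    _ = ∑ j', ∑ t', ∑ i', star (V i' i) * C (i', t') (j', t') * V j' j := by
        refine Finset.sum_congr rfl fun j' _ => ?_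
        refine Finset.sum_congr rfl fun t' _ => ?_
        refine Finset.sum_congr rfl fun i' _ => ?_
        simp only [hU', ite_mul, one_mul, zero_mul, Finset.sum_ite_eq, Finset.mem_univ, if_true]
    _ = _ := by
        refine Finset.sum_congr rfl fun j' _ => ?_
        rw [Finset.sum_comm]

lemma eig_diag {n : Type*} [Fintype n] [DecidableEq n] (A : Matrix n n ℂ) (hA : A.IsHermitian) :
    ∃ U : Matrix n n ℂ, U * Uᴴ = 1 ∧ Uᴴ * U = 1 ∧
      ∀ s, (Uᴴ * A * U) s s = (hA.eigenvalues s : ℂ) := by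
  set E : Matrix n n ℂ := hA.eigenvectorUnitary.1 with hE
  have hE1 : E * Eᴴ = 1 := by
    have := (Matrix.mem_unitaryGroup_iff (A := E)).1 hA.eigenvectorUnitary.2
    simpa [star_eq_conjTranspose] using this
  have hE2 : Eᴴ * E = 1 := by
    have := (Matrix.mem_unitaryGroup_iff' (A := E)).1 hA.eigenvectorUnitary.2
    simpa [star_eq_conjTranspose] using this
  have hspec : A = E * Matrix.diagonal (fun k => (hA.eigenvalues k : ℂ)) * Eᴴ := by
    have := hA.spectral_theorem
    rw [Unitary.conjStarAlgAut_apply] at this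
    simpa [star_eq_conjTranspose, Function.comp_def, hE] using this
  refine ⟨E, hE1, hE2, fun s => ?_⟩
  have : Eᴴ * A * E = Matrix.diagonal (fun k => (hA.eigenvalues k : ℂ)) := by
    conv_lhs => rw [hspec]
    rw [show Eᴴ * (E * Matrix.diagonal (fun k => (hA.eigenvalues k : ℂ)) * Eᴴ) * E =
      (Eᴴ * E) * Matrix.diagonal (fun k => (hA.eigenvalues k : ℂ)) * (Eᴴ * E) by
        simp only [Matrix.mul_assoc], hE2]
    simp
  rw [this, Matrix.diagonal_apply_eq]

lemma exists_c (d : ℕ) (hd : 2 < d)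
    (hp0 : 0 < 2 * d) (hp1 : 1 < 2 * d) (hp2 : 2 < 2 * d)
    (C : Matrix (Fin 2 × Fin d) (Fin 2 × Fin d) ℂ) (hC : C.IsHermitian)
    (htr1 : (ptrace1 C).IsHermitian) (htr2 : (ptrace2 C).IsHermitian)
    (μ : Fin (2 * d) → ℝ) (hμ : Antitone μ)
    (g : Fin (2 * d) ≃ Fin 2 × Fin d) (hg : ∀ k, μ k = hC.eigenvalues (g k)) :
    ∃ c : Fin 2 × Fin d → ℝ, (∀ x, c x ≤ μ ⟨0, hp0⟩) ∧
      (∀ S : Finset (Fin 2 × Fin d), 2 ≤ S.card →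
        ∑ x ∈ S, c x ≤ μ ⟨0, hp0⟩ + μ ⟨1, hp1⟩ + ((S.card : ℝ) - 2) * μ ⟨2, hp2⟩) ∧
      (∑ x, c x = ∑ k, μ k) ∧
      (∀ s, htr1.eigenvalues s = ∑ i, c (i, s)) ∧ (∀ i, htr2.eigenvalues i = ∑ s, c (i, s)) := by
  obtain ⟨U, hU1, hU2, hU⟩ := eig_diag _ htr1
  obtain ⟨V, hV1, hV2, hV⟩ := eig_diag _ htr2
  have hW1 : (V ⊗ₖ U) * (V ⊗ₖ U)ᴴ = 1 := by
    rw [Matrix.conjTranspose_kronecker, ← Matrix.mul_kronecker_mul, hU1, hV1,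
      Matrix.one_kronecker_one]
  have hW2 : (V ⊗ₖ U)ᴴ * (V ⊗ₖ U) = 1 := by
    rw [Matrix.conjTranspose_kronecker, ← Matrix.mul_kronecker_mul, hU2, hV2,
      Matrix.one_kronecker_one]
  obtain ⟨D, hD0, hD1, hD2, hD⟩ := schur_diag C hC _ hW1 hW2
  have hc : ∀ x, ∑ k, D x k * hC.eigenvalues k = ∑ k, D x (g k) * μ k := by
    intro x
    rw [← g.sum_comp]
    simp only [hg]
  have hDg : ∀ x, ∑ k, D x (g k) = 1 := fun x => by rw [g.sum_comp (fun k => D x k), hD1]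
  refine ⟨fun x => ∑ k, D x k * hC.eigenvalues k, ?_, ?_, ?_, ?_, ?_⟩
  · intro x
    simp only [hc]
    calc ∑ k, D x (g k) * μ k ≤ ∑ k, D x (g k) * μ ⟨0, by omega⟩ :=
          Finset.sum_le_sum fun k _ => mul_le_mul_of_nonneg_left
            (hμ (Fin.mk_le_of_le_val (Nat.zero_le _))) (hD0 _ _)
      _ = _ := by rw [← Finset.sum_mul, hDg, one_mul]
  · intro S hS
    simp only [hc]
    rw [Finset.sum_comm]
    simp only [← Finset.sum_mul]
    set a := μ ⟨0, by omega⟩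
    set b := μ ⟨1, by omega⟩
    set m := μ ⟨2, by omega⟩
    have hw0 : ∀ k, 0 ≤ ∑ x ∈ S, D x (g k) := fun k => Finset.sum_nonneg fun x _ => hD0 _ _
    have hw1 : ∀ k, ∑ x ∈ S, D x (g k) ≤ 1 := fun k => by
      rw [← hD2 (g k)]
      exact Finset.sum_le_sum_of_subset_of_nonneg (Finset.subset_univ _) fun x _ _ => hD0 _ _
    have hws : ∑ k, ∑ x ∈ S, D x (g k) = S.card := by
      rw [Finset.sum_comm]
      simp [hDg]
    have hma : m ≤ a := hμ (by simp [Fin.le_def])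
    have hmb : m ≤ b := hμ (by simp [Fin.le_def])
    have step : ∀ k, (∑ x ∈ S, D x (g k)) * (μ k - m) ≤
        (if k = ⟨0, by omega⟩ then a - m else 0) + (if k = ⟨1, by omega⟩ then b - m else 0) := by
      intro k
      by_cases h0 : k = ⟨0, by omega⟩
      · subst h0
        have := mul_le_mul_of_nonneg_right (hw1 ⟨0, by omega⟩) (sub_nonneg.2 hma)
        simpa using this
      by_cases h1 : k = ⟨1, by omega⟩
      · subst h1
        have := mul_le_mul_of_nonneg_right (hw1 ⟨1, by omega⟩) (sub_nonneg.2 hmb)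
        simpa using this
      · rw [if_neg h0, if_neg h1, add_zero]
        have hk : μ k ≤ m := by
          apply hμ
          rw [Fin.ext_iff] at h0 h1
          simp only [Fin.le_def] at *
          omega
        exact mul_nonpos_of_nonneg_of_nonpos (hw0 k) (by linarith)
    have hsum := Finset.sum_le_sum fun k (_ : k ∈ Finset.univ) => step k
    simp only [mul_sub, Finset.sum_sub_distrib, Finset.sum_add_distrib, Finset.sum_ite_eq',
      Finset.mem_univ, if_true] at hsum
    rw [← Finset.sum_mul, hws] at hsum
    linarith
  · simp only [hc]
    rw [Finset.sum_comm]
    simp only [← Finset.sum_mul, hD2, one_mul]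
  · intro s
    have := ptrace1_conj C V hV1 U s s
    rw [hU] at this
    simp only [hD] at this
    exact_mod_cast this.symm
  · intro i
    have := ptrace2_conj C V U hU1 i i
    rw [hV] at this
    simp only [hD] at this
    exact_mod_cast this.symm

lemma row_sums (d : ℕ) (hd : 2 < d) (a b m e : ℝ) :
    (∑ s : Fin d, (if (s : ℕ) = 0 then a else if (s : ℕ) = 1 then b else m) =
      a + b + ((d : ℝ) - 2) * m) ∧
    (∑ s : Fin d, (if (s : ℕ) = d - 1 then e else m) = ((d : ℝ) - 1) * m + e) ∧
    (∑ s : Fin d, (if (s : ℕ) = 0 then a else m) = a + ((d : ℝ) - 1) * m) ∧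
    (∑ s : Fin d, (if (s : ℕ) = 0 then b else if (s : ℕ) = d - 1 then e else m) =
      b + ((d : ℝ) - 2) * m + e) := by
  obtain ⟨n, rfl⟩ : ∃ n, d = n + 3 := ⟨d - 3, by omega⟩
  have hlt : ∀ x : Fin (n + 1), (x : ℕ) ≠ n + 1 := fun x => by omega
  have hlt' : ∀ x : Fin (n + 2), (x : ℕ) ≠ n + 2 := fun x => by omega
  refine ⟨?_, ?_, ?_, ?_⟩
  · rw [Fin.sum_univ_succ, Fin.sum_univ_succ]
    simp
    ring
  · rw [Fin.sum_univ_castSucc]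
    simp only [Fin.val_castSucc, Fin.val_last, show n + 3 - 1 = n + 2 from rfl, hlt', if_false, if_true, Finset.sum_const, Finset.card_univ, Fintype.card_fin, nsmul_eq_mul]
    push_cast
    ring
  · rw [Fin.sum_univ_succ]
    simp only [Fin.val_zero, Fin.val_succ, Nat.succ_ne_zero, if_false, if_true, Finset.sum_const, Finset.card_univ, Fintype.card_fin, nsmul_eq_mul]
    push_cast
    ring
  · rw [Fin.sum_univ_succ, Fin.sum_univ_castSucc]
    simp [hlt]
    ring

theorem sufficient_lambda2_qubit_qudit (d : ℕ) (hd : 2 < d)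
    (C : Matrix (Fin 2 × Fin d) (Fin 2 × Fin d) ℂ) (hC : C.PosSemidef)
    (htr1 : (ptrace1 C).IsHermitian) (htr2 : (ptrace2 C).IsHermitian)
    -- `μ` lists the eigenvalues of `C` in decreasing order
    (μ : Fin (2 * d) → ℝ) (hμ : Antitone μ)
    (g : Fin (2 * d) ≃ Fin 2 × Fin d) (hg : ∀ k, μ k = hC.1.eigenvalues (g k))
    -- `λ_3 = … = λ_{2d-1}` (`μ` is 0-indexed)
    (hmid : ∀ i j : Fin (2 * d), 2 ≤ (i : ℕ) → (i : ℕ) ≤ 2 * d - 2 →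
      2 ≤ (j : ℕ) → (j : ℕ) ≤ 2 * d - 2 → μ i = μ j)
    -- `λ_2 ≥ 2(d-2)λ_3 + λ_{2d}`
    (hgap : 2 * ((d : ℝ) - 2) * μ ⟨2, by omega⟩ + μ ⟨2 * d - 1, by omega⟩ ≤ μ ⟨1, by omega⟩) :
    Majorizes (Sum.elim htr1.eigenvalues htr2.eigenvalues)
      (Sum.elim (fun s : Fin d => ∑ i : Fin 2, μ (finProdFinEquiv (i, s)))
                (fun j : Fin 2 => ∑ s : Fin d, μ (finProdFinEquiv (j, s)))) ∨
    Majorizes (Sum.elim htr1.eigenvalues htr2.eigenvalues)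
      (Sum.elim
        (fun s : Fin d => ∑ i : Fin 2,
          μ (Equiv.swap (⟨1, by omega⟩ : Fin (2 * d)) ⟨d, by omega⟩ (finProdFinEquiv (i, s))))
        (fun j : Fin 2 => ∑ s : Fin d,
          μ (Equiv.swap (⟨1, by omega⟩ : Fin (2 * d)) ⟨d, by omega⟩ (finProdFinEquiv (j, s))))) := by
  obtain ⟨c, hc1, hc2, hc3, hc4, hc5⟩ := exists_c d hd (by omega) (by omega) (by omega) C hC.1 htr1 htr2 μ hμ g hg
  have hmv : ∀ (k : Fin (2 * d)), 2 ≤ (k : ℕ) → (k : ℕ) ≤ 2 * d - 2 → μ k = μ ⟨2, by omega⟩ :=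
    fun k h h' => hmid k ⟨2, by omega⟩ h h' (by simp) (by simp; omega)
  have hev : ∀ (k : Fin (2 * d)), (k : ℕ) = 2 * d - 1 → μ k = μ ⟨2 * d - 1, by omega⟩ :=
    fun k h => congrArg μ (Fin.ext h)
  have hav : ∀ (k : Fin (2 * d)), (k : ℕ) = 0 → μ k = μ ⟨0, by omega⟩ :=
    fun k h => congrArg μ (Fin.ext h)
  have hbv : ∀ (k : Fin (2 * d)), (k : ℕ) = 1 → μ k = μ ⟨1, by omega⟩ :=
    fun k h => congrArg μ (Fin.ext h)
  have hba : μ ⟨1, by omega⟩ ≤ μ ⟨0, by omega⟩ := hμ (by simp [Fin.le_def])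
  have hmb : μ ⟨2, by omega⟩ ≤ μ ⟨1, by omega⟩ := hμ (by simp [Fin.le_def])
  have hem : μ ⟨2 * d - 1, by omega⟩ ≤ μ ⟨2, by omega⟩ := hμ (by simp [Fin.le_def]; omega)
  have he : 0 ≤ μ ⟨2 * d - 1, by omega⟩ := by
    rw [hg]
    exact hC.eigenvalues_nonneg _
  set a := μ ⟨0, by omega⟩
  set b := μ ⟨1, by omega⟩
  set m := μ ⟨2, by omega⟩
  set e := μ ⟨2 * d - 1, by omega⟩
  have hv : ∀ (i : Fin 2) (s : Fin d), ((finProdFinEquiv (i, s) : Fin (2 * d)) : ℕ) =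
      s + d * i := fun i s => by simp [finProdFinEquiv]
  -- entries of `Λ`
  have r0 : ∀ s : Fin d, μ (finProdFinEquiv (0, s)) =
      if (s : ℕ) = 0 then a else if (s : ℕ) = 1 then b else m := by
    intro s
    have h := hv 0 s
    have hs := s.2
    simp only [Fin.val_zero, mul_zero, add_zero] at h
    split_ifs with h0 h1
    · exact hav _ (by omega)
    · exact hbv _ (by omega)
    · exact hmv _ (by omega) (by omega)
  have r1 : ∀ s : Fin d, μ (finProdFinEquiv (1, s)) = if (s : ℕ) = d - 1 then e else m := by
    intro s
    have h := hv 1 s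
    have hs := s.2
    simp only [Fin.val_one, mul_one] at h
    split_ifs with h0
    · exact hev _ (by omega)
    · exact hmv _ (by omega) (by omega)
  -- entries after the swap
  have q0 : ∀ s : Fin d, μ (Equiv.swap (⟨1, by omega⟩ : Fin (2 * d)) ⟨d, by omega⟩
      (finProdFinEquiv (0, s))) = if (s : ℕ) = 0 then a else m := by
    intro s
    have h := hv 0 s
    have hs := s.2
    simp only [Fin.val_zero, mul_zero, add_zero] at h
    by_cases h1 : (s : ℕ) = 1
    · rw [show finProdFinEquiv (0, s) = (⟨1, by omega⟩ : Fin (2 * d)) from Fin.ext (by simp only [h]; omega),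
        Equiv.swap_apply_left, if_neg (by omega)]
      exact hmv _ (by simp; omega) (by simp; omega)
    · rw [Equiv.swap_apply_of_ne_of_ne (by rw [Ne, Fin.ext_iff]; simp only; omega)
        (by rw [Ne, Fin.ext_iff]; simp only; omega), r0, if_neg h1]
  have q1 : ∀ s : Fin d, μ (Equiv.swap (⟨1, by omega⟩ : Fin (2 * d)) ⟨d, by omega⟩
      (finProdFinEquiv (1, s))) = if (s : ℕ) = 0 then b else if (s : ℕ) = d - 1 then e else m := by
    intro s
    have h := hv 1 s
    have hs := s.2
    simp only [Fin.val_one, mul_one] at h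
    by_cases h1 : (s : ℕ) = 0
    · rw [show finProdFinEquiv (1, s) = (⟨d, by omega⟩ : Fin (2 * d)) from Fin.ext (by simp only [h]; omega),
        Equiv.swap_apply_right, if_pos h1]
    · rw [Equiv.swap_apply_of_ne_of_ne (by rw [Ne, Fin.ext_iff]; simp only; omega)
        (by rw [Ne, Fin.ext_iff]; simp only; omega), r1, if_neg h1]
  have hrow := row_sums d hd
  have s0 : ∑ s : Fin d, μ (finProdFinEquiv (0, s)) = a + b + ((d : ℝ) - 2) * m := by
    simp only [r0]
    exact (hrow a b m e).1
  have s1 : ∑ s : Fin d, μ (finProdFinEquiv (1, s)) = ((d : ℝ) - 1) * m + e := by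
    simp only [r1]
    exact (hrow a b m e).2.1
  have hT : ∑ k, μ k = a + b + (2 * (d : ℝ) - 3) * m + e := by
    rw [← finProdFinEquiv.sum_comp, Fintype.sum_prod_type, Fin.sum_univ_two, s0, s1]
    ring
  refine maj_or d hd c a b m e hba hmb hem he hgap hc1 hc2 (hc3.trans hT) _ _ hc4 hc5 _ _
    ?_ ?_ ?_ ?_ ?_ ?_ ?_ ?_ ?_ ?_ ?_ ?_
  · simp only [Sum.elim_inl, Fin.sum_univ_two, r0, r1]
    rw [if_pos trivial, if_neg (by omega)]
  · simp only [Sum.elim_inl, Fin.sum_univ_two, r0, r1]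
    rw [if_neg (by omega), if_pos trivial, if_neg (by omega)]
  · intro s hs hs'
    simp only [Sum.elim_inl, Fin.sum_univ_two, r0, r1]
    rw [if_neg (by omega), if_neg (by omega), if_neg (by omega)]
    ring
  · simpa only [Sum.elim_inr] using s0
  · simpa only [Sum.elim_inr] using s1
  · simp only [Sum.elim_inl, Fin.sum_univ_two, q0, q1]
    rw [if_pos trivial, if_pos trivial]
  · simp only [Sum.elim_inl, Fin.sum_univ_two, q0, q1]
    rw [if_neg (by omega), if_neg (by omega), if_neg (by omega)]
    ring
  · intro s hs hs'
    simp only [Sum.elim_inl, Fin.sum_univ_two, q0, q1]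
    rw [if_neg (by omega), if_neg (by omega), if_neg (by omega)]
    ring
  · simp only [Sum.elim_inr, q0]
    exact (hrow a b m e).2.2.1
  · simp only [Sum.elim_inr, q1]
    exact (hrow a b m e).2.2.2
  · simp only [Sum.elim_inl, Sum.elim_inr]
    rw [Finset.sum_comm]
  · simp only [Sum.elim_inl, Sum.elim_inr]
    rw [Finset.sum_comm]
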